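/- Let Z be the tree on the 13 vertices {u₀, a₀, b₀, c₀, u₁, a₁, b₁, u₂, a₂, b₂, u₃, a₃, b₃} with edges u₀a₀, u₀b₀, u₀c₀, c₀u₁, u₁a₁, u₁b₁, a₀u₂, u₂a₂, u₂b₂, a₁u₃, u₃a₃, u₃b₃ (the unique subcubic appended 3-star of diameter 8 built from four 3-stars). Then γ^ID(Z) = 8, and in particular γ^ID(Z) < (2/3)·13. -/

import Mathlib

open SimpleGraph

/-- The closed neighborhood `N[v]` of a vertex `v` in `G`. -/
def closedNbhd {V : Type*} (G : SimpleGraph V) (v : V) : Set V :=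
  insert v (G.neighborSet v)

/-- `C` is an identifying code of `G`: it dominates every vertex and the
closed neighborhoods of distinct vertices intersect `C` differently. -/
def IsIDCode {V : Type*} (G : SimpleGraph V) (C : Set V) : Prop :=
  (∀ v, (closedNbhd G v ∩ C).Nonempty) ∧
  ∀ u w : V, u ≠ w → closedNbhd G u ∩ C ≠ closedNbhd G w ∩ C

/-- The identification number `γ^ID(G)`: the minimum size of an identifying code. -/
noncomputable def idNum {V : Type*} [Fintype V] (G : SimpleGraph V) : ℕ :=
  sInf {k | ∃ C : Set V, C.ncard = k ∧ IsIDCode G C}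

/-- `G` is identifiable (closed-twin-free). -/
def Identifiable {V : Type*} (G : SimpleGraph V) : Prop :=
  ∀ u w : V, u ≠ w → closedNbhd G u ≠ closedNbhd G w

/-- The maximum degree of a finite graph `G`. -/
noncomputable def maxDeg {V : Type*} [Fintype V] (G : SimpleGraph V) : ℕ :=
  Finset.univ.sup fun v => (G.neighborSet v).ncard

/-- `S` is a dominating set of `G`. -/
def IsDomSet {V : Type*} (G : SimpleGraph V) (S : Set V) : Prop :=
  ∀ v, (closedNbhd G v ∩ S).Nonempty

/-- The domination number `γ(G)`. -/
noncomputable def domNum {V : Type*} [Fintype V] (G : SimpleGraph V) : ℕ :=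
  sInf {k | ∃ S : Set V, S.ncard = k ∧ IsDomSet G S}

/-- The star `K_{1,k}`: vertex `0` is adjacent to each of the `k` other vertices. -/
def starGraph (k : ℕ) : SimpleGraph (Fin (k + 1)) :=
  SimpleGraph.fromRel fun a _ => a = 0

/-- The graph obtained from `G'` by appending a star with `k` extra leaves onto the
vertex `v`: we add a new universal vertex `u = Sum.inr none` adjacent to `v`,
and `k` new leaves `Sum.inr (some i)` adjacent to `u` (so the star has `k + 1`
leaves in total, one of which is identified with `v`, i.e. a `(k+1)`-star is
appended by one of its leaves onto `v`). -/
def appendStar {V : Type*} (G' : SimpleGraph V) (v : V) (k : ℕ) :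
    SimpleGraph (V ⊕ Option (Fin k)) :=
  SimpleGraph.fromRel fun a b =>
    (∃ x y, a = Sum.inl x ∧ b = Sum.inl y ∧ G'.Adj x y) ∨
    (a = Sum.inl v ∧ b = Sum.inr none) ∨
    (∃ i, a = Sum.inr none ∧ b = Sum.inr (some i))

/-- The tree `Z`, the unique subcubic appended 3-star of diameter 8: vertices
`u₀=0, a₀=1, b₀=2, c₀=3, u₁=4, a₁=5, b₁=6, u₂=7, a₂=8, b₂=9, u₃=10, a₃=11, b₃=12`. -/
def Zgraph : SimpleGraph (Fin 13) :=
  SimpleGraph.fromEdgeSet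
    {s(0, 1), s(0, 2), s(0, 3), s(3, 4), s(4, 5), s(4, 6),
     s(1, 7), s(7, 8), s(7, 9), s(5, 10), s(10, 11), s(10, 12)}

/-!
Cutting `Z` at `c₀` leaves two isomorphic branches, `{u₀, a₀, b₀, u₂, a₂, b₂}` and
`{u₁, a₁, b₁, u₃, a₃, b₃}`, and every identifying code `C` has at least four vertices in each.
Indeed `C` contains one of `u₀, b₀` and two of `u₂, a₂, b₂`. A third vertex of the star
`{a₀, u₂, a₂, b₂}` lies in `C` whenever `a₀` or `u₂` does; if neither does, then dominating `a₀`
forces `u₀ ∈ C`, and separating `a₀` from `b₀` forces `b₀ ∈ C`.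
-/

theorem mem_closedNbhd {V : Type*} {G : SimpleGraph V} {v z : V} :
    z ∈ closedNbhd G v ↔ z = v ∨ G.Adj v z :=
  Iff.rfl

instance {V : Type*} [DecidableEq V] (G : SimpleGraph V) [DecidableRel G.Adj] (v : V) :
    DecidablePred (· ∈ closedNbhd G v) :=
  fun _ ↦ decidable_of_iff' _ mem_closedNbhd

theorem isIDCode_iff {V : Type*} {G : SimpleGraph V} {C : Set V} :
    IsIDCode G C ↔ (∀ v, ∃ z ∈ C, z ∈ closedNbhd G v) ∧
      ∀ u w, u ≠ w → ∃ z ∈ C, ¬(z ∈ closedNbhd G u ↔ z ∈ closedNbhd G w) := by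
  simp only [IsIDCode, Set.inter_comm _ C, Set.Nonempty, Set.mem_inter_iff, ne_eq, Set.ext_iff,
    not_forall, and_congr_right_iff, exists_prop]

theorem idNum_eq_ncard {V : Type*} [Fintype V] {G : SimpleGraph V} {C : Set V}
    (hC : IsIDCode G C) (hmin : ∀ D, IsIDCode G D → C.ncard ≤ D.ncard) :
    idNum G = C.ncard :=
  IsLeast.csInf_eq ⟨⟨C, rfl, hC⟩, by rintro _ ⟨D, rfl, hD⟩; exact hmin D hD⟩

/-- The vertices `t, x, y` come from a 3-star with center `t` whose third leaf was identified with
the vertex `a` of another graph, so that `x` and `y` are leaves of `G` and `a` may have any further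
neighbors. -/
structure IsAppendedThreeStar {V : Type*} (G : SimpleGraph V) (a t x y : V) : Prop where
  neighborSet_center : G.neighborSet t = {a, x, y}
  neighborSet_left : G.neighborSet x = {t}
  neighborSet_right : G.neighborSet y = {t}
  base_ne_left : a ≠ x
  base_ne_right : a ≠ y
  left_ne_right : x ≠ y

namespace IsIDCode

variable {V : Type*} {G : SimpleGraph V} {C : Set V}

theorem exists_mem_closedNbhd (hC : IsIDCode G C) (v : V) : ∃ z ∈ C, z ∈ closedNbhd G v :=
  (isIDCode_iff.1 hC).1 v

theorem exists_separating (hC : IsIDCode G C) {u w : V} (huw : u ≠ w) :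
    ∃ z ∈ C, ¬(z ∈ closedNbhd G u ↔ z ∈ closedNbhd G w) :=
  (isIDCode_iff.1 hC).2 u w huw

theorem support_mem_of_leaf_notMem (hC : IsIDCode G C) {t x : V}
    (hx : G.neighborSet x = {t}) (hxC : x ∉ C) : t ∈ C := by
  obtain ⟨z, hz, rfl | hxz⟩ := hC.exists_mem_closedNbhd x
  · exact absurd hz hxC
  · obtain rfl : z = t := hx.subset hxz
    exact hz

theorem mem_or_mem_of_leaves (hC : IsIDCode G C) {t x y : V} (hxy : x ≠ y)
    (hx : G.neighborSet x = {t}) (hy : G.neighborSet y = {t}) : x ∈ C ∨ y ∈ C := by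
  obtain ⟨z, hz, hsep⟩ := hC.exists_separating hxy
  simp only [closedNbhd, hx, hy, Set.mem_insert_iff, Set.mem_singleton_iff] at hsep
  grind

theorem exists_adj_support_ne_leaf (hC : IsIDCode G C) {t x : V} (hx : G.neighborSet x = {t}) :
    ∃ z ∈ C, G.Adj t z ∧ z ≠ x := by
  have htx : G.Adj x t := hx.superset rfl
  obtain ⟨z, hz, hsep⟩ := hC.exists_separating htx.ne'
  simp only [closedNbhd, hx, Set.mem_insert_iff, Set.mem_singleton_iff, mem_neighborSet] at hsep
  have := htx.symm
  exact ⟨z, hz, by grind⟩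

theorem encard_leaves_le (hC : IsIDCode G C) {t : V} {L : Set V}
    (hL : ∀ x ∈ L, G.neighborSet x = {t}) : L.encard ≤ (C ∩ insert t L).encard := by
  classical
  have htL : t ∉ L := fun ht ↦ G.irrefl ((hL t ht).superset rfl)
  -- At most one leaf at `t` is missing from `C`, and then `t ∈ C` can replace it.
  let f : V → V := fun x ↦ if x ∈ C then x else t
  have hf : Set.MapsTo f L (C ∩ insert t L) := fun x hx ↦ by
    by_cases hxC : x ∈ C
    · simp only [f, if_pos hxC]
      exact ⟨hxC, Or.inr hx⟩
    · simp only [f, if_neg hxC]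
      exact ⟨hC.support_mem_of_leaf_notMem (hL x hx) hxC, Or.inl rfl⟩
  have hinj : Set.InjOn f L := fun x hx y hy hxy ↦ by
    by_contra hne
    have := hC.mem_or_mem_of_leaves hne (hL x hx) (hL y hy)
    grind
  exact Set.encard_le_encard_of_injOn hf hinj

theorem two_le_encard_appendedThreeStar (hC : IsIDCode G C) {a t x y : V}
    (hG : IsAppendedThreeStar G a t x y) : 2 ≤ (C ∩ {t, x, y}).encard := by
  have hleaves : ∀ z ∈ ({x, y} : Set V), G.neighborSet z = {t} := by
    rintro z (rfl | rfl)
    exacts [hG.neighborSet_left, hG.neighborSet_right]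
  simpa only [Set.encard_pair hG.left_ne_right] using hC.encard_leaves_le hleaves

theorem leaves_mem_of_base_notMem (hC : IsIDCode G C) {a t x y : V}
    (hG : IsAppendedThreeStar G a t x y) (haC : a ∉ C) : x ∈ C ∧ y ∈ C := by
  obtain ⟨z, hz, htz, hzx⟩ := hC.exists_adj_support_ne_leaf hG.neighborSet_left
  obtain ⟨w, hw, htw, hwy⟩ := hC.exists_adj_support_ne_leaf hG.neighborSet_right
  have hz' := hG.neighborSet_center.subset htz
  have hw' := hG.neighborSet_center.subset htw
  simp only [Set.mem_insert_iff, Set.mem_singleton_iff] at hz' hw'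
  grind

theorem three_le_encard_appendedThreeStar (hC : IsIDCode G C) {a t x y : V}
    (hG : IsAppendedThreeStar G a t x y) (hat : a ∈ C ∨ t ∈ C) :
    3 ≤ (C ∩ {a, t, x, y}).encard := by
  have hta : G.Adj t a := hG.neighborSet_center.superset (by simp)
  have htx : G.Adj x t := hG.neighborSet_left.superset rfl
  have hty : G.Adj y t := hG.neighborSet_right.superset rfl
  by_cases haC : a ∈ C
  · have ha : a ∉ C ∩ {t, x, y} := by
      simp [hta.ne', hG.base_ne_left, hG.base_ne_right]
    rw [Set.inter_insert_of_mem haC, Set.encard_insert_of_notMem ha]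
    exact add_le_add_left (hC.two_le_encard_appendedThreeStar hG) 1
  · obtain ⟨hxC, hyC⟩ := hC.leaves_mem_of_base_notMem hG haC
    have hsub : {t, x, y} ⊆ C ∩ {a, t, x, y} := by grind
    calc (3 : ℕ∞) = ({t, x, y} : Set V).encard :=
          (Set.encard_eq_three.2 ⟨t, x, y, htx.ne', hty.ne', hG.left_ne_right, rfl⟩).symm
      _ ≤ _ := Set.encard_le_encard hsub

theorem leaf_support_mem_of_base_center_notMem (hC : IsIDCode G C) {l s a t : V}
    (hl : G.neighborSet l = {s}) (ha : G.neighborSet a = {s, t}) (hst : s ≠ t)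
    (haC : a ∉ C) (htC : t ∉ C) : s ∈ C ∧ l ∈ C := by
  have hla : l ≠ a := by
    rintro rfl
    exact hst (hl.subset (ha.superset (by simp)) : t = s).symm
  obtain ⟨z, hz, haz⟩ := hC.exists_mem_closedNbhd a
  obtain ⟨w, hw, hsep⟩ := hC.exists_separating hla
  simp only [closedNbhd, hl, ha, Set.mem_insert_iff, Set.mem_singleton_iff] at haz hsep
  grind

theorem four_le_encard_branch (hC : IsIDCode G C) {l s a t x y : V}
    (hG : IsAppendedThreeStar G a t x y) (ha : G.neighborSet a = {s, t})
    (hl : G.neighborSet l = {s}) (hdisj : Disjoint {s, l} ({a, t, x, y} : Set V)) :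
    4 ≤ (C ∩ ({s, l} ∪ {a, t, x, y})).encard := by
  rw [Set.inter_union_distrib_left,
    Set.encard_union_eq (hdisj.mono Set.inter_subset_right Set.inter_subset_right)]
  by_cases hat : a ∈ C ∨ t ∈ C
  · have hsl : 1 ≤ (C ∩ {s, l}).encard := by
      simpa using hC.encard_leaves_le (L := {l}) (by simpa using hl)
    exact add_le_add hsl (hC.three_le_encard_appendedThreeStar hG hat)
  · obtain ⟨haC, htC⟩ := not_or.1 hat
    have hst : s ≠ t := by rintro rfl; simp at hdisj
    have hslC := hC.leaf_support_mem_of_base_center_notMem hl ha hst haC htC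
    have hsl : G.Adj l s := hl.superset rfl
    have hsub : C ∩ {s, l} = {s, l} := by grind
    have hstar : 2 ≤ (C ∩ {a, t, x, y}).encard :=
      (hC.two_le_encard_appendedThreeStar hG).trans (Set.encard_le_encard (by grind))
    rw [hsub, Set.encard_pair hsl.ne']
    exact add_le_add_right hstar 2

end IsIDCode

instance : DecidableRel Zgraph.Adj := by
  unfold Zgraph
  infer_instance

theorem isAppendedThreeStar_Zgraph_left : IsAppendedThreeStar Zgraph 1 7 8 9 := by
  constructor <;> first | decide | (ext i; revert i; decide)

theorem isAppendedThreeStar_Zgraph_right : IsAppendedThreeStar Zgraph 5 10 11 12 := by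
  constructor <;> first | decide | (ext i; revert i; decide)

theorem four_le_encard_left_branch_Zgraph {C : Set (Fin 13)} (hC : IsIDCode Zgraph C) :
    4 ≤ (C ∩ ({0, 2} ∪ {1, 7, 8, 9})).encard := by
  have ha₀ : Zgraph.neighborSet 1 = {0, 7} := by ext i; revert i; decide
  have hb₀ : Zgraph.neighborSet 2 = {0} := by ext i; revert i; decide
  exact hC.four_le_encard_branch isAppendedThreeStar_Zgraph_left ha₀ hb₀ (by simp)

theorem four_le_encard_right_branch_Zgraph {C : Set (Fin 13)} (hC : IsIDCode Zgraph C) :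
    4 ≤ (C ∩ ({4, 6} ∪ {5, 10, 11, 12})).encard := by
  have ha₁ : Zgraph.neighborSet 5 = {4, 10} := by ext i; revert i; decide
  have hb₁ : Zgraph.neighborSet 6 = {4} := by ext i; revert i; decide
  exact hC.four_le_encard_branch isAppendedThreeStar_Zgraph_right ha₁ hb₁ (by simp)

theorem eight_le_ncard_of_isIDCode_Zgraph {C : Set (Fin 13)} (hC : IsIDCode Zgraph C) :
    8 ≤ C.ncard := by
  have hdisj : Disjoint ({0, 2} ∪ {1, 7, 8, 9}) ({4, 6} ∪ {5, 10, 11, 12} : Set (Fin 13)) := by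
    simp
  rw [← Nat.cast_le (α := ℕ∞), C.toFinite.cast_ncard_eq]
  calc (8 : ℕ∞) = 4 + 4 := by norm_num
    _ ≤ _ :=
        add_le_add (four_le_encard_left_branch_Zgraph hC) (four_le_encard_right_branch_Zgraph hC)
    _ = _ := (Set.encard_union_eq
        (hdisj.mono Set.inter_subset_right Set.inter_subset_right)).symm
    _ ≤ C.encard :=
        Set.encard_le_encard (Set.union_subset Set.inter_subset_left Set.inter_subset_left)

/-- A minimum identifying code of `Z`, namely `{u₀, a₀, u₁, a₁, u₂, a₂, u₃, a₃}`: the center and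
one leaf of each of the four 3-stars. -/
def codeZgraph : Finset (Fin 13) :=
  {0, 1, 4, 5, 7, 8, 10, 11}

theorem isIDCode_codeZgraph : IsIDCode Zgraph codeZgraph := by
  simp only [isIDCode_iff, Finset.mem_coe]
  decide

/-- `γ^ID(Z) = 8 < (2/3)·13`. -/
theorem stmt_13 : idNum Zgraph = 8 ∧ (idNum Zgraph : ℝ) < 2 / 3 * 13 := by
  have hcard : (codeZgraph : Set (Fin 13)).ncard = 8 := Set.ncard_coe_finset codeZgraph
  have hmin : ∀ D, IsIDCode Zgraph D → (codeZgraph : Set (Fin 13)).ncard ≤ D.ncard :=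
    fun D hD ↦ hcard.trans_le (eight_le_ncard_of_isIDCode_Zgraph hD)
  have hidNum : idNum Zgraph = 8 := (idNum_eq_ncard isIDCode_codeZgraph hmin).trans hcard
  refine ⟨hidNum, ?_⟩
  rw [hidNum]
  norm_num
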